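/- arXiv:1004.2574 — 7 statements merged into one kernel-verified Lean document; each statement's English description precedes it below -/
import Mathlib

section
/- Fix a natural number k ≥ 1. For every ρ > 0 and every c : Fin k → ℝ there exists a unique function r : Fin (k+1) → ℝ such that r m > 0 for every m, (r i)² − (r (i+1))² = c i for every i ∈ Fin k, and Π_m r m = ρ. (This determines the moduli of the points of the lagrangian level-set torus S^a_{(c_1,…,c_k)} in the fiber ψ^{-1}(a) with |a| = ρ.) -/
noncomputable section

/-- Nonempty products of square roots `∏ √(t + d m)` attain every positive value at some `t`
at which all the radicands are positive. -/
theorem exists_prod_sqrt_add_eq {ι : Type*} [Fintype ι] [Nonempty ι] (d : ι → ℝ) {ρ : ℝ}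
    (hρ : 0 < ρ) : ∃ t : ℝ, (∀ m, 0 < t + d m) ∧ ∏ m, √(t + d m) = ρ := by
  obtain ⟨m₀, hm₀⟩ := Finite.exists_min d
  have hcont : Continuous fun t : ℝ => ∏ m, √(t + d m) := by fun_prop
  have hle : -d m₀ ≤ -d m₀ + (1 + ρ) ^ 2 := by nlinarith [sq_nonneg (1 + ρ)]
  have hleft : ∏ m, √(-d m₀ + d m) = 0 :=
    Finset.prod_eq_zero (Finset.mem_univ m₀) (by simp)
  have hright : ρ ≤ ∏ m, √(-d m₀ + (1 + ρ) ^ 2 + d m) := by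
    calc ρ ≤ 1 + ρ := by linarith
      _ ≤ (1 + ρ) ^ Fintype.card ι := le_self_pow₀ (by linarith) Fintype.card_ne_zero
      _ = ∏ _m : ι, (1 + ρ) := by simp
      _ ≤ ∏ m, √(-d m₀ + (1 + ρ) ^ 2 + d m) := by
        refine Finset.prod_le_prod (fun _ _ => by linarith) fun m _ => ?_
        exact Real.le_sqrt_of_sq_le (by linarith [hm₀ m])
  obtain ⟨t, ht, htρ⟩ := intermediate_value_Icc hle hcont.continuousOn
    (show ρ ∈ Set.Icc _ _ from ⟨hleft.le.trans hρ.le, hright⟩)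
  refine ⟨t, fun m => ?_, htρ⟩
  by_contra hm
  have : ∏ m, √(t + d m) = 0 :=
    Finset.prod_eq_zero (Finset.mem_univ m) (Real.sqrt_eq_zero_of_nonpos (not_lt.mp hm))
  exact hρ.ne' (htρ.symm.trans this)

/-- A positive family is determined by its product and the successive differences of its
squares. -/
theorem eq_of_sq_sub_sq_eq_of_prod_eq {k : ℕ} {r s : Fin (k + 1) → ℝ}
    (hr : ∀ m, 0 < r m) (hs : ∀ m, 0 < s m)
    (hsq : ∀ i : Fin k, r i.castSucc ^ 2 - r i.succ ^ 2 = s i.castSucc ^ 2 - s i.succ ^ 2)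
    (hprod : ∏ m, r m = ∏ m, s m) : r = s := by
  have hconst : ∀ m, s m ^ 2 - r m ^ 2 = s 0 ^ 2 - r 0 ^ 2 := by
    intro m
    induction m using Fin.induction with
    | zero => rfl
    | succ i ih => linarith [hsq i]
  rcases lt_trichotomy (s 0 ^ 2 - r 0 ^ 2) 0 with h | h | h
  · refine absurd hprod (ne_of_gt ?_)
    refine Finset.prod_lt_prod_of_nonempty (fun m _ => hs m) (fun m _ => ?_)
      Finset.univ_nonempty
    exact lt_of_pow_lt_pow_left₀ 2 (hr m).le (by linarith [hconst m])
  · funext m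
    exact (pow_left_inj₀ (hr m).le (hs m).le two_ne_zero).mp (by linarith [hconst m])
  · refine absurd hprod (ne_of_lt ?_)
    refine Finset.prod_lt_prod_of_nonempty (fun m _ => hr m) (fun m _ => ?_)
      Finset.univ_nonempty
    exact lt_of_pow_lt_pow_left₀ 2 (hs m).le (by linarith [hconst m])

/-- for every `ρ > 0` and every `c : Fin k → ℝ` there is a unique
`r : Fin (k+1) → ℝ` with all entries positive, satisfying `r_i² − r_{i+1}² = c_i`
for every `i` and `r_1 ⋯ r_{k+1} = ρ`.  (These are the moduli of the points of the
level-set torus `S^a_{(c_1,…,c_k)}` in the fiber `ψ⁻¹(a)`, `|a| = ρ`.) -/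
theorem stmt_6 (k : ℕ) (hk : 1 ≤ k) (ρ : ℝ) (hρ : 0 < ρ) (c : Fin k → ℝ) :
    ∃! r : Fin (k + 1) → ℝ,
      (∀ m, 0 < r m) ∧
        (∀ i : Fin k, (r i.castSucc) ^ 2 - (r i.succ) ^ 2 = c i) ∧
        (∏ m, r m) = ρ := by
  obtain ⟨t, ht, htρ⟩ := exists_prod_sqrt_add_eq (fun m => -Fin.partialSum c m) hρ
  have hsq : ∀ i : Fin k, √(t + -Fin.partialSum c i.castSucc) ^ 2 -
      √(t + -Fin.partialSum c i.succ) ^ 2 = c i := by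
    intro i
    rw [Real.sq_sqrt (ht _).le, Real.sq_sqrt (ht _).le, Fin.partialSum_succ]
    ring
  refine ⟨fun m => √(t + -Fin.partialSum c m),
    ⟨fun m => Real.sqrt_pos.mpr (ht m), hsq, htρ⟩, ?_⟩
  rintro s ⟨hs, hsc, hsρ⟩
  exact eq_of_sq_sub_sq_eq_of_prod_eq hs (fun m => Real.sqrt_pos.mpr (ht m))
    (fun i => (hsc i).trans (hsq i).symm) (hsρ.trans htρ.symm)
end
end

section
/- Fix a natural number k ≥ 1, a complex number a ≠ 0, and c : Fin k → ℝ. The set S^a_c = { z ∈ ℂ^{k+1} : Π_m z m = a and ‖z i‖² − ‖z (i+1)‖² = c i for every i ∈ Fin k }, equipped with the subspace topology, is nonempty and homeomorphic to the k-dimensional torus Fin k → Circle (the product of k copies of the unit circle). That is, each mutual level set of the functions F_1, …, F_k on a smooth fiber of ψ is a smooth lagrangian torus of the completely integrable system on that fiber. -/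
noncomputable section

/-- The level-set torus `S^a_c` in the fiber `ψ⁻¹(a)`: the mutual level set of the
functions `F_1, …, F_k` on that fiber. -/
def levelTorus (k : ℕ) (a : ℂ) (c : Fin k → ℝ) : Set (Fin (k + 1) → ℂ) :=
  { z | (∏ m, z m) = a ∧ ∀ i : Fin k, ‖z i.castSucc‖ ^ 2 - ‖z i.succ‖ ^ 2 = c i }

/-- Every family of consecutive differences is realised by some sequence. -/
lemma exists_consecutive_differences (k : ℕ) (c : Fin k → ℝ) :
    ∃ d : Fin (k + 1) → ℝ, ∀ i : Fin k, d i.castSucc - d i.succ = c i := by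
  refine ⟨fun m => -∑ j ∈ Finset.range m, if h : j < k then c ⟨j, h⟩ else 0, fun i => ?_⟩
  simp [Finset.sum_range_succ]

/-- If the consecutive differences of `x` and `y` agree, then `x - y` is constant. -/
lemma sub_eq_sub_zero_of_consecutive {k : ℕ} {x y : Fin (k + 1) → ℝ}
    (h : ∀ i : Fin k, x i.castSucc - x i.succ = y i.castSucc - y i.succ) (m : Fin (k + 1)) :
    x m - y m = x 0 - y 0 := by
  induction m using Fin.induction with
  | zero => rfl
  | succ i ih => linarith [h i]

/-- A product of translates `t + d m` attains every positive value at some `t` for which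
all factors are positive. -/
lemma exists_pos_translate_prod_eq {k : ℕ} (d : Fin (k + 1) → ℝ) {p : ℝ} (hp : 0 < p) :
    ∃ t : ℝ, (∀ m, 0 < t + d m) ∧ ∏ m, (t + d m) = p := by
  obtain ⟨m₀, hm₀⟩ := Finite.exists_min d
  have hcont : ContinuousOn (fun t : ℝ => ∏ m, (t + d m))
      (Set.Icc (-d m₀) (-d m₀ + (p + 1))) := by fun_prop
  have hlow : ∏ m, (-d m₀ + d m) = 0 :=
    Finset.prod_eq_zero (Finset.mem_univ m₀) (by simp)
  have hhigh : p ≤ ∏ m, (-d m₀ + (p + 1) + d m) :=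
    calc p ≤ p + 1 := by linarith
      _ ≤ (p + 1) ^ (k + 1) := le_self_pow₀ (by linarith) (by simp)
      _ = ∏ _m : Fin (k + 1), (p + 1) := by simp
      _ ≤ _ := Finset.prod_le_prod (fun _ _ => by linarith) fun m _ => by linarith [hm₀ m]
  obtain ⟨t, ht, htp⟩ := intermediate_value_Icc (by linarith) hcont
    (show p ∈ Set.Icc _ _ from ⟨by simp only [hlow, hp.le], hhigh⟩)
  refine ⟨t, fun m => lt_of_le_of_ne (by linarith [ht.1, hm₀ m]) fun h => hp.ne' ?_, htp⟩
  rw [← htp]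
  exact Finset.prod_eq_zero (Finset.mem_univ m) h.symm

/-- There are positive radii with prescribed product and prescribed differences of squares. -/
lemma exists_radii {k : ℕ} (c : Fin k → ℝ) {p : ℝ} (hp : 0 < p) :
    ∃ r : Fin (k + 1) → ℝ, (∀ m, 0 < r m) ∧ ∏ m, r m = p ∧
      ∀ i : Fin k, r i.castSucc ^ 2 - r i.succ ^ 2 = c i := by
  obtain ⟨d, hd⟩ := exists_consecutive_differences k c
  obtain ⟨t, ht, htp⟩ := exists_pos_translate_prod_eq d (pow_pos hp 2)
  refine ⟨fun m => √(t + d m), fun m => Real.sqrt_pos.2 (ht m), ?_, fun i => ?_⟩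
  · rw [← pow_left_inj₀ (Finset.prod_nonneg fun _ _ => Real.sqrt_nonneg _) hp.le two_ne_zero,
      ← Finset.prod_pow, ← htp]
    exact Finset.prod_congr rfl fun m _ => Real.sq_sqrt (ht m).le
  · simp only [Real.sq_sqrt (ht _).le]
    linarith [hd i]

/-- Nonnegative radii with the same product and the same differences of squares as positive
radii have squares bounded by theirs at the first index. -/
lemma sq_zero_le_of_prod_eq {k : ℕ} {r s : Fin (k + 1) → ℝ} (hr : ∀ m, 0 < r m)
    (hs : ∀ m, 0 ≤ s m) (hprod : ∏ m, r m = ∏ m, s m)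
    (h : ∀ i : Fin k, r i.castSucc ^ 2 - r i.succ ^ 2 = s i.castSucc ^ 2 - s i.succ ^ 2) :
    s 0 ^ 2 ≤ r 0 ^ 2 := by
  by_contra! hlt
  refine hprod.not_lt (Finset.prod_lt_prod_of_nonempty (fun m _ => hr m) (fun m _ => ?_)
    Finset.univ_nonempty)
  have := sub_eq_sub_zero_of_consecutive (x := fun m => r m ^ 2) (y := fun m => s m ^ 2) h m
  exact lt_of_pow_lt_pow_left₀ 2 (hs m) (by linarith)

/-- Positive radii are determined by their product and their differences of squares. -/
lemma radii_unique {k : ℕ} {r s : Fin (k + 1) → ℝ} (hr : ∀ m, 0 < r m)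
    (hs : ∀ m, 0 < s m) (hprod : ∏ m, r m = ∏ m, s m)
    (h : ∀ i : Fin k, r i.castSucc ^ 2 - r i.succ ^ 2 = s i.castSucc ^ 2 - s i.succ ^ 2) :
    r = s := by
  have hsr := sq_zero_le_of_prod_eq hr (fun m => (hs m).le) hprod h
  have hrs := sq_zero_le_of_prod_eq hs (fun m => (hr m).le) hprod.symm fun i => (h i).symm
  funext m
  have := sub_eq_sub_zero_of_consecutive (x := fun m => r m ^ 2) (y := fun m => s m ^ 2) h m
  exact (pow_left_inj₀ (hr m).le (hs m).le two_ne_zero).1 (by linarith)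

/-- `levelTorus k a c` consists of the points with fixed positive radii and product `a`. -/
lemma mem_levelTorus_iff {k : ℕ} {a : ℂ} (ha : a ≠ 0) {c : Fin k → ℝ} {r : Fin (k + 1) → ℝ}
    (hr : ∀ m, 0 < r m) (hprod : ∏ m, r m = ‖a‖)
    (hc : ∀ i : Fin k, r i.castSucc ^ 2 - r i.succ ^ 2 = c i) {z : Fin (k + 1) → ℂ} :
    z ∈ levelTorus k a c ↔ ∏ m, z m = a ∧ ∀ m, ‖z m‖ = r m := by
  refine and_congr_right fun hz => ⟨fun h => ?_, fun h i => by rw [h, h, hc]⟩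
  refine congrFun (radii_unique (fun m => norm_pos_iff.2 fun hm => ha ?_) hr ?_ fun i => ?_)
  · rw [← hz]
    exact Finset.prod_eq_zero (Finset.mem_univ m) hm
  · rw [hprod, ← hz, norm_prod]
  · rw [h, hc]

/-- The point with product `a` whose coordinates after the first have radii `r` and phases `θ`. -/
def torusPoint {k : ℕ} (a : ℂ) (r : Fin (k + 1) → ℝ) (θ : Fin k → Circle) : Fin (k + 1) → ℂ :=
  Fin.cons (a / ∏ i : Fin k, ((r i.succ : ℂ) * θ i)) fun i => (r i.succ : ℂ) * θ i

lemma prod_radii_mul_circle_ne_zero {k : ℕ} {r : Fin (k + 1) → ℝ} (hr : ∀ m, 0 < r m)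
    (θ : Fin k → Circle) : ∏ i : Fin k, ((r i.succ : ℂ) * θ i) ≠ 0 :=
  Finset.prod_ne_zero_iff.2 fun _ _ =>
    mul_ne_zero (Complex.ofReal_ne_zero.2 (hr _).ne') (Circle.coe_ne_zero _)

lemma continuous_torusPoint {k : ℕ} (a : ℂ) {r : Fin (k + 1) → ℝ} (hr : ∀ m, 0 < r m) :
    Continuous (torusPoint a r) := by
  refine continuous_pi fun m => ?_
  cases m using Fin.cases with
  | zero =>
    simp only [torusPoint, Fin.cons_zero]
    exact continuous_const.div (by fun_prop) (prod_radii_mul_circle_ne_zero hr)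
  | succ i =>
    simp only [torusPoint, Fin.cons_succ]
    fun_prop

lemma torusPoint_injective {k : ℕ} (a : ℂ) {r : Fin (k + 1) → ℝ} (hr : ∀ m, 0 < r m) :
    Function.Injective (torusPoint a r) := by
  intro θ φ h
  funext i
  have hi := congrFun h i.succ
  simp only [torusPoint, Fin.cons_succ] at hi
  exact Circle.ext (mul_left_cancel₀ (Complex.ofReal_ne_zero.2 (hr _).ne') hi)

lemma prod_torusPoint {k : ℕ} (a : ℂ) {r : Fin (k + 1) → ℝ} (hr : ∀ m, 0 < r m)
    (θ : Fin k → Circle) : ∏ m, torusPoint a r θ m = a := by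
  rw [Fin.prod_univ_succ]
  simp only [torusPoint, Fin.cons_zero, Fin.cons_succ]
  exact div_mul_cancel₀ _ (prod_radii_mul_circle_ne_zero hr θ)

lemma norm_torusPoint {k : ℕ} {a : ℂ} {r : Fin (k + 1) → ℝ} (hr : ∀ m, 0 < r m)
    (hprod : ∏ m, r m = ‖a‖) (θ : Fin k → Circle) (m : Fin (k + 1)) :
    ‖torusPoint a r θ m‖ = r m := by
  have hnorm (i : Fin k) : ‖(r i.succ : ℂ) * θ i‖ = r i.succ := by
    rw [norm_mul, Circle.norm_coe, mul_one, Complex.norm_of_nonneg (hr _).le]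
  cases m using Fin.cases with
  | zero =>
    simp only [torusPoint, Fin.cons_zero]
    rw [norm_div, norm_prod, Finset.prod_congr rfl fun i _ => hnorm i, ← hprod,
      Fin.prod_univ_succ]
    exact mul_div_cancel_right₀ _ (Finset.prod_pos fun i _ => hr i.succ).ne'
  | succ i => simpa only [torusPoint, Fin.cons_succ] using hnorm i

lemma exists_torusPoint_eq {k : ℕ} {a : ℂ} {r : Fin (k + 1) → ℝ} (hr : ∀ m, 0 < r m)
    {z : Fin (k + 1) → ℂ} (hz : ∏ m, z m = a) (hnorm : ∀ m, ‖z m‖ = r m) :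
    ∃ θ : Fin k → Circle, torusPoint a r θ = z := by
  have hr' (m : Fin (k + 1)) : (r m : ℂ) ≠ 0 := Complex.ofReal_ne_zero.2 (hr m).ne'
  let θ : Fin k → Circle := fun i => ⟨z i.succ / r i.succ, by
    simp [Submonoid.unitSphere, hnorm, abs_of_pos (hr i.succ), (hr i.succ).ne']⟩
  have hθ (i : Fin k) : (r i.succ : ℂ) * θ i = z i.succ := mul_div_cancel₀ _ (hr' _)
  have hne := prod_radii_mul_circle_ne_zero hr θ
  refine ⟨θ, funext fun m => ?_⟩
  cases m using Fin.cases with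
  | zero =>
    simp only [torusPoint, Fin.cons_zero]
    rw [div_eq_iff hne, ← hz, Fin.prod_univ_succ]
    simp only [hθ]
  | succ i => simpa only [torusPoint, Fin.cons_succ] using hθ i

/-- for `a ≠ 0` and any `c`, the mutual level set `S^a_c`, with the subspace
topology, is nonempty and homeomorphic to the `k`-dimensional torus `Fin k → Circle`. -/
theorem stmt_7 (k : ℕ) (hk : 1 ≤ k) (a : ℂ) (ha : a ≠ 0) (c : Fin k → ℝ) :
    (levelTorus k a c).Nonempty ∧
      Nonempty (↥(levelTorus k a c) ≃ₜ (Fin k → Circle)) := by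
  obtain ⟨r, hr, hprod, hc⟩ := exists_radii c (norm_pos_iff.2 ha)
  have hmem {z : Fin (k + 1) → ℂ} := mem_levelTorus_iff ha hr hprod hc (z := z)
  let f : (Fin k → Circle) → levelTorus k a c := fun θ =>
    ⟨torusPoint a r θ, hmem.2 ⟨prod_torusPoint a hr θ, norm_torusPoint hr hprod θ⟩⟩
  have hf : Continuous f := (continuous_torusPoint a hr).subtype_mk _
  have hbij : Function.Bijective f := by
    refine ⟨fun θ φ h => torusPoint_injective a hr (congrArg Subtype.val h), fun z => ?_⟩
    obtain ⟨hz, hnorm⟩ := hmem.1 z.2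
    obtain ⟨θ, hθ⟩ := exists_torusPoint_eq hr hz hnorm
    exact ⟨θ, Subtype.ext hθ⟩
  have e : (Fin k → Circle) ≃ₜ levelTorus k a c :=
    Continuous.homeoOfEquivCompactToT2 (f := Equiv.ofBijective f hbij) hf
  exact ⟨⟨_, (f 1).2⟩, ⟨e.symm⟩⟩
end
end

section
/- Fix a natural number k ≥ 1 and let z ∈ ℂ^{k+1} satisfy ψ(z) ≠ 0. Suppose v, w ∈ ℂ^{k+1} both lie in the kernel of the real Fréchet derivative of ψ at z and in the kernel of the real Fréchet derivative of F_i at z for every i ∈ Fin k. Then ω(v, w) = 0. That is, the tangent space at any point of a mutual level set { F_1 = c_1, …, F_k = c_k } inside a smooth fiber ψ^{-1}(a), a ≠ 0, is an isotropic (hence lagrangian in the fiber) subspace of the standard symplectic vector space ℂ^{k+1}. -/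
noncomputable section

/-- The standard symplectic form on `ℂ^n`: `ω(v, w) = Σ_m Im(conj (v m) * w m)`. -/
def omegaStd {n : ℕ} (v w : Fin n → ℂ) : ℝ :=
  ∑ m, ((starRingEnd ℂ) (v m) * w m).im

/-- The fibration `ψ(z) = z_1 ⋯ z_{k+1}`, viewed as a smooth map of real vector spaces. -/
def psiFib {k : ℕ} (z : Fin (k + 1) → ℂ) : ℂ := ∏ m, z m

/-- The commuting functions `F_i(z) = ‖z i‖² − ‖z (i+1)‖²`. -/
def Ffun {k : ℕ} (i : Fin k) (z : Fin (k + 1) → ℂ) : ℝ :=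
  ‖z i.castSucc‖ ^ 2 - ‖z i.succ‖ ^ 2

/-- The logarithmic derivative of a product of nonzero coordinates. -/
theorem fderiv_psiFib_apply {k : ℕ} (z v : Fin (k + 1) → ℂ) (hz : ∀ m, z m ≠ 0) :
    fderiv ℝ psiFib z v = psiFib z * ∑ m, v m / z m := by
  have h : HasFDerivAt (𝕜 := ℝ) (psiFib (k := k)) _ z := hasFDerivAt_finsetProd
  rw [h.fderiv, sum_apply, Finset.mul_sum]
  refine Finset.sum_congr rfl fun m _ => ?_
  have hm := hz m
  rw [psiFib, ← Finset.mul_prod_erase Finset.univ z (Finset.mem_univ m)]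
  simp only [smul_apply, ContinuousLinearMap.proj_apply, smul_eq_mul]
  field_simp

theorem fderiv_Ffun_apply {k : ℕ} (i : Fin k) (z v : Fin (k + 1) → ℂ) :
    fderiv ℝ (Ffun i) z v =
      2 * inner ℝ (z i.castSucc) (v i.castSucc) - 2 * inner ℝ (z i.succ) (v i.succ) := by
  have h (m : Fin (k + 1)) :
      HasFDerivAt (fun z : Fin (k + 1) → ℂ => ‖z m‖ ^ 2) _ z :=
    (hasFDerivAt_apply (𝕜 := ℝ) m z).norm_sq
  have hF : HasFDerivAt (Ffun i) _ z := (h i.castSucc).sub (h i.succ)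
  rw [hF.fderiv]
  simp
  ring

/-- A function on `Fin (k + 1)` whose consecutive values agree is constant. -/
theorem Fin.eq_apply_zero_of_castSucc_eq_succ {k : ℕ} {α : Type*} {f : Fin (k + 1) → α}
    (h : ∀ i : Fin k, f i.castSucc = f i.succ) (m : Fin (k + 1)) : f m = f 0 := by
  induction m using Fin.induction with
  | zero => rfl
  | succ i ih => rw [← h i, ih]

theorem Complex.re_div_eq_inner_mul_inv_norm_sq (a b : ℂ) :
    (b / a).re = inner ℝ a b * (‖a‖ ^ 2)⁻¹ := by
  rw [Complex.inner, Complex.div_re, ← Complex.normSq_eq_norm_sq, Complex.mul_re,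
    Complex.conj_re, Complex.conj_im]
  ring

/-- A common tangent vector to a fiber of `psiFib` and to the level sets of all `Ffun i` is
tangent to the torus orbit through the base point: each ratio `v m / z m` is imaginary. -/
theorem re_div_eq_zero_of_fderiv_eq_zero {k : ℕ} {z v : Fin (k + 1) → ℂ} (hz : ∀ m, z m ≠ 0)
    (hv : fderiv ℝ psiFib z v = 0) (hvF : ∀ i : Fin k, fderiv ℝ (Ffun i) z v = 0)
    (m : Fin (k + 1)) : (v m / z m).re = 0 := by
  have hsum : ∑ m, v m / z m = 0 := by
    rw [fderiv_psiFib_apply z v hz] at hv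
    exact (mul_eq_zero.mp hv).resolve_left (Finset.prod_ne_zero_iff.mpr fun m _ => hz m)
  have hconst : ∀ m, inner ℝ (z m) (v m) = (inner ℝ (z 0) (v 0) : ℝ) :=
    Fin.eq_apply_zero_of_castSucc_eq_succ (f := fun m => (inner ℝ (z m) (v m) : ℝ)) fun i => by
      have := hvF i
      rw [fderiv_Ffun_apply] at this
      linarith
  have hpos : 0 < ∑ m, (‖z m‖ ^ 2)⁻¹ :=
    Finset.sum_pos (fun m _ => inv_pos.mpr (pow_pos (norm_pos_iff.mpr (hz m)) 2))
      Finset.univ_nonempty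
  have hre : inner ℝ (z 0) (v 0) * ∑ m, (‖z m‖ ^ 2)⁻¹ = 0 := by
    rw [Finset.mul_sum, ← Complex.zero_re, ← hsum, Complex.re_sum]
    exact Finset.sum_congr rfl fun m _ => by
      rw [Complex.re_div_eq_inner_mul_inv_norm_sq, hconst m]
  rw [Complex.re_div_eq_inner_mul_inv_norm_sq, hconst m,
    (mul_eq_zero.mp hre).resolve_right hpos.ne', zero_mul]

/-- at a point `z` of a smooth fiber (`ψ(z) ≠ 0`), any two vectors lying both
in the kernel of `dψ_z` and in the kernels of all `d(F_i)_z` are `ω`-orthogonal: the tangent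
space to a mutual level set `{F_1 = c_1, …, F_k = c_k}` inside a smooth fiber is isotropic
(hence lagrangian in the fiber). -/
theorem stmt_8 (k : ℕ) (hk : 1 ≤ k) (z : Fin (k + 1) → ℂ) (hz : psiFib z ≠ 0)
    (v w : Fin (k + 1) → ℂ)
    (hv : fderiv ℝ psiFib z v = 0) (hw : fderiv ℝ psiFib z w = 0)
    (hvF : ∀ i : Fin k, fderiv ℝ (Ffun i) z v = 0)
    (hwF : ∀ i : Fin k, fderiv ℝ (Ffun i) z w = 0) :
    omegaStd v w = 0 := by
  have hz' : ∀ m, z m ≠ 0 := fun m => Finset.prod_ne_zero_iff.mp hz m (Finset.mem_univ m)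
  refine Finset.sum_eq_zero fun m _ => ?_
  have ha := re_div_eq_zero_of_fderiv_eq_zero hz' hv hvF m
  have hb := re_div_eq_zero_of_fderiv_eq_zero hz' hw hwF m
  rw [← div_mul_cancel₀ (v m) (hz' m), ← div_mul_cancel₀ (w m) (hz' m)]
  simp only [Complex.mul_im, Complex.mul_re, Complex.conj_re, Complex.conj_im, ha, hb]
  ring
end
end

section
/- Fix a natural number k ≥ 1 and c : Fin k → ℝ. Let Γ ⊆ ℂ be the image of a topological embedding of Circle into ℂ with 0 ∉ Γ (a smooth loop in ℂ not passing through the origin). Then the set S_{Γ,c} = { z ∈ ℂ^{k+1} : Π_m z m ∈ Γ and ‖z i‖² − ‖z (i+1)‖² = c i for every i ∈ Fin k }, with the subspace topology, is homeomorphic to the (k+1)-dimensional torus Fin (k+1) → Circle. (This is the topological part of Proposition 1.1: fixing a couple (c_1,…,c_k) of non-critical values and a loop γ ⊂ ℂ_a avoiding the origin defines a torus S_{γ,(c_1,…,c_k)} = ⋃_{a∈γ} S^a_{(c_1,…,c_k)} in ℂ^{k+1}.) -/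
noncomputable section

/-- The torus `S_{Γ,c} = ⋃_{a ∈ Γ} S^a_c` over a loop `Γ` in the base. -/
def loopTorus (k : ℕ) (Γ : Set ℂ) (c : Fin k → ℝ) : Set (Fin (k + 1) → ℂ) :=
  { z | (∏ m, z m) ∈ Γ ∧ ∀ i : Fin k, ‖z i.castSucc‖ ^ 2 - ‖z i.succ‖ ^ 2 = c i }

/-- The level sets of `t ↦ ∏ i, (t + d i)` at positive heights meet the region where all factors
are positive. -/
theorem exists_prod_add_eq {n : ℕ} (d : Fin (n + 1) → ℝ) {r : ℝ} (hr : 0 < r) :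
    ∃ t : ℝ, (∀ i, 0 < t + d i) ∧ ∏ i, (t + d i) = r := by
  obtain ⟨j, hj⟩ := Finite.exists_min d
  have hcont : Continuous fun t : ℝ => ∏ i, (t + d i) := by fun_prop
  have hle : -d j ≤ -d j + (1 + r) := by linarith
  have hlow : ∏ i, (-d j + d i) = 0 := Finset.prod_eq_zero (Finset.mem_univ j) (by ring)
  have hhigh : r ≤ ∏ i, (-d j + (1 + r) + d i) := by
    calc r ≤ (1 + r) ^ (n + 1) := by
          have : 1 + r ≤ (1 + r) ^ (n + 1) := le_self_pow₀ (by linarith : (1 : ℝ) ≤ 1 + r) (Nat.succ_ne_zero n)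
          linarith
      _ = ∏ _i : Fin (n + 1), (1 + r) := by simp
      _ ≤ _ := Finset.prod_le_prod (fun _ _ => by linarith) fun i _ => by linarith [hj i]
  obtain ⟨t, ht, htr⟩ := intermediate_value_Icc hle hcont.continuousOn
    (⟨by simpa only [hlow] using hr.le, hhigh⟩ : r ∈ Set.Icc _ _)
  simp only at htr
  refine ⟨t, fun i => ?_, htr⟩
  have hnonneg : 0 ≤ t + d i := by linarith [hj i, ht.1]
  refine hnonneg.lt_of_ne' fun h => hr.ne ?_
  rw [← htr, Finset.prod_eq_zero (Finset.mem_univ i) h]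

/-- If the squared norms of the coordinates of two points differ by the same offsets and their
products of norms agree and are nonzero, then the norms of the coordinates agree. -/
theorem norm_eq_norm_of_prod_eq {n : ℕ} {d : Fin (n + 1) → ℝ} {z w : Fin (n + 1) → ℂ}
    (hz : ∀ i, ‖z i‖ ^ 2 = ‖z 0‖ ^ 2 + d i) (hw : ∀ i, ‖w i‖ ^ 2 = ‖w 0‖ ^ 2 + d i)
    (hz0 : ∀ i, z i ≠ 0) (hw0 : ∀ i, w i ≠ 0) (hprod : ∏ i, ‖z i‖ = ∏ i, ‖w i‖)
    (i : Fin (n + 1)) : ‖z i‖ = ‖w i‖ := by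
  have key : ‖z 0‖ ^ 2 = ‖w 0‖ ^ 2 := by
    rcases lt_trichotomy (‖z 0‖ ^ 2) (‖w 0‖ ^ 2) with h | h | h
    · refine absurd hprod (Finset.prod_lt_prod_of_nonempty (fun i _ => norm_pos_iff.2 (hz0 i))
        (fun i _ => ?_) Finset.univ_nonempty).ne
      exact lt_of_pow_lt_pow_left₀ 2 (norm_nonneg _) (by linarith [hz i, hw i])
    · exact h
    · refine absurd hprod (Finset.prod_lt_prod_of_nonempty (fun i _ => norm_pos_iff.2 (hw0 i))
        (fun i _ => ?_) Finset.univ_nonempty).ne'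
      exact lt_of_pow_lt_pow_left₀ 2 (norm_nonneg _) (by linarith [hz i, hw i])
  refine (pow_left_inj₀ (norm_nonneg _) (norm_nonneg _) two_ne_zero).1 ?_
  rw [hz, hw, key]

/-- The phase `z / ‖z‖` of a nonzero complex number. -/
def complexPhase (z : ℂ) (hz : z ≠ 0) : Circle :=
  ⟨z / ‖z‖, mem_sphere_zero_iff_norm.2 (by simp [hz])⟩

theorem coe_complexPhase (z : ℂ) (hz : z ≠ 0) : (complexPhase z hz : ℂ) = z / ‖z‖ := rfl

theorem norm_mul_complexPhase (z : ℂ) (hz : z ≠ 0) : (‖z‖ : ℂ) * complexPhase z hz = z := by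
  rw [coe_complexPhase, mul_div_cancel₀]
  simpa using hz

theorem complexPhase_mul_coe {r : ℝ} (hr : 0 < r) (u : Circle) (h : (r : ℂ) * u ≠ 0) :
    complexPhase (r * u) h = u := by
  ext
  have : (r : ℂ) ≠ 0 := by exact_mod_cast hr.ne'
  rw [coe_complexPhase]
  rw [norm_mul, Circle.norm_coe, mul_one, Complex.norm_of_nonneg hr.le, mul_div_cancel_left₀ _ this]

theorem continuous_complexPhase {X : Type*} [TopologicalSpace X] {f : X → ℂ} (hf : Continuous f)
    (h : ∀ x, f x ≠ 0) : Continuous fun x => complexPhase (f x) (h x) := by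
  refine Continuous.subtype_mk (hf.div (by fun_prop) fun x => ?_) _
  simpa using h x

/-- The relations between consecutive coordinates, summed up as relations with coordinate `0`. -/
theorem mem_loopTorus_iff {k : ℕ} {Γ : Set ℂ} {c : Fin k → ℝ} {z : Fin (k + 1) → ℂ} :
    z ∈ loopTorus k Γ c ↔
      (∏ m, z m) ∈ Γ ∧ ∀ i, ‖z i‖ ^ 2 = ‖z 0‖ ^ 2 + -Fin.partialSum c i := by
  refine and_congr_right fun _ => ⟨fun h i => ?_, fun h i => ?_⟩
  · induction i using Fin.induction with
    | zero => simp
    | succ i ih =>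
      rw [Fin.partialSum_succ]
      linarith [h i]
  · rw [h i.castSucc, h i.succ, Fin.partialSum_succ]
    ring

theorem ne_zero_of_mem_loopTorus {k : ℕ} {Γ : Set ℂ} {c : Fin k → ℝ} (hΓ : (0 : ℂ) ∉ Γ)
    {z : Fin (k + 1) → ℂ} (hz : z ∈ loopTorus k Γ c) (i : Fin (k + 1)) : z i ≠ 0 :=
  fun h => hΓ (Finset.prod_eq_zero (Finset.mem_univ i) h ▸ hz.1)

theorem isCompact_loopTorus (k : ℕ) {Γ : Set ℂ} (hΓ : IsCompact Γ) (c : Fin k → ℝ) :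
    IsCompact (loopTorus k Γ c) := by
  refine Metric.isCompact_of_isClosed_isBounded ?_ ?_
  · have hlevel (i : Fin k) :
        IsClosed {z : Fin (k + 1) → ℂ | ‖z i.castSucc‖ ^ 2 - ‖z i.succ‖ ^ 2 = c i} :=
      isClosed_eq (by fun_prop) continuous_const
    have hprod : IsClosed {z : Fin (k + 1) → ℂ | ∏ m, z m ∈ Γ} :=
      hΓ.isClosed.preimage (by fun_prop)
    have heq : loopTorus k Γ c = {z | ∏ m, z m ∈ Γ} ∩
        ⋂ i : Fin k, {z | ‖z i.castSucc‖ ^ 2 - ‖z i.succ‖ ^ 2 = c i} := by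
      ext z
      simp [loopTorus]
    exact heq ▸ hprod.inter (isClosed_iInter hlevel)
  obtain ⟨M, hM⟩ := hΓ.isBounded.exists_norm_le
  obtain ⟨C, hC⟩ := (Set.finite_range fun i => |Fin.partialSum c i|).bddAbove
  have hC' (i) : |Fin.partialSum c i| ≤ C := hC ⟨i, rfl⟩
  refine isBounded_iff_forall_norm_le.2 ⟨1 + (1 + 2 * C + M ^ 2), fun z hz => ?_⟩
  have hC0 : 0 ≤ C := (abs_nonneg _).trans (hC' 0)
  rw [mem_loopTorus_iff] at hz
  obtain ⟨hprod, hz⟩ := hz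
  have hz0 : ‖z 0‖ ^ 2 ≤ 1 + C + M ^ 2 := by
    by_contra! hlt
    have hone (i) : 1 ≤ ‖z i‖ := by
      refine (one_le_sq_iff₀ (norm_nonneg _)).1 ?_
      nlinarith [hz i, (abs_le.1 (hC' i)).2]
    have hle : ‖z 0‖ ≤ M := by
      refine le_trans ?_ (hM _ hprod)
      rw [norm_prod, Fin.prod_univ_succ]
      refine le_mul_of_one_le_right (norm_nonneg _) ?_
      simpa using Finset.prod_le_prod (s := Finset.univ) (f := fun _ => (1 : ℝ))
        (fun _ _ => zero_le_one) fun (i : Fin k) _ => hone i.succ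
    nlinarith [norm_nonneg (z 0)]
  refine (pi_norm_le_iff_of_nonneg (by positivity)).2 fun i => ?_
  nlinarith [hz i, (abs_le.1 (hC' i)).1, sq_nonneg (‖z i‖ - 1)]

/-- topological part of Proposition 1.1: if `Γ ⊆ ℂ` is the image of a
topological embedding of the circle avoiding the origin, then for any `c : Fin k → ℝ`
the set `S_{Γ,c}`, with the subspace topology, is homeomorphic to the `(k+1)`-dimensional
torus `Fin (k+1) → Circle`. -/
theorem stmt_10 (k : ℕ) (hk : 1 ≤ k) (c : Fin k → ℝ) (Γ : Set ℂ)
    (hemb : ∃ e : Circle → ℂ, Topology.IsEmbedding e ∧ Set.range e = Γ)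
    (hΓ : (0 : ℂ) ∉ Γ) :
    Nonempty (↥(loopTorus k Γ c) ≃ₜ (Fin (k + 1) → Circle)) := by
  obtain ⟨e, he, rfl⟩ := hemb
  have : CompactSpace (loopTorus k (Set.range e) c) :=
    isCompact_iff_compactSpace.1 (isCompact_loopTorus k (isCompact_range he.continuous) c)
  have hne (z : loopTorus k (Set.range e) c) (i) : z.1 i ≠ 0 :=
    ne_zero_of_mem_loopTorus hΓ z.2 i
  let f (z : loopTorus k (Set.range e) c) : Fin (k + 1) → Circle :=
    Fin.cons (he.toHomeomorph.symm ⟨∏ m, z.1 m, z.2.1⟩)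
      fun i => complexPhase (z.1 i.succ) (hne z i.succ)
  have hcont : Continuous f := by
    refine continuous_pi fun i => ?_
    induction i using Fin.cases with
    | zero =>
      exact he.toHomeomorph.symm.continuous.comp (Continuous.subtype_mk (by fun_prop) _)
    | succ i =>
      exact continuous_complexPhase ((continuous_apply i.succ).comp continuous_subtype_val)
        fun z => hne z i.succ
  have hinj : Function.Injective f := by
    intro z w hzw
    obtain ⟨hbase, hphase⟩ := Fin.cons_inj.1 hzw
    have hprod : ∏ m, z.1 m = ∏ m, w.1 m :=
      congrArg Subtype.val (he.toHomeomorph.symm.injective hbase)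
    have hnorm := norm_eq_norm_of_prod_eq (mem_loopTorus_iff.1 z.2).2 (mem_loopTorus_iff.1 w.2).2
      (hne z) (hne w) (by rw [← norm_prod, ← norm_prod, hprod])
    have hsucc (i : Fin k) : z.1 i.succ = w.1 i.succ := by
      rw [← norm_mul_complexPhase _ (hne z i.succ), ← norm_mul_complexPhase _ (hne w i.succ),
        hnorm, congrFun hphase i]
    ext i
    induction i using Fin.cases with
    | zero =>
      rw [Fin.prod_univ_succ, Fin.prod_univ_succ, Finset.prod_congr rfl fun i _ => hsucc i] at hprod
      exact mul_right_cancel₀ (Finset.prod_ne_zero_iff.2 fun i _ => hne w i.succ) hprod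
    | succ i => exact hsucc i
  have hsurj : Function.Surjective f := by
    intro u
    have ha : e (u 0) ≠ 0 := fun h => hΓ ⟨u 0, h⟩
    obtain ⟨t, htpos, htprod⟩ := exists_prod_add_eq (fun i => -Fin.partialSum c i)
      (pow_pos (norm_pos_iff.2 ha) 2)
    have hρpos (i) : 0 < √(t + -Fin.partialSum c i) := Real.sqrt_pos.2 (htpos i)
    have hρprod : ∏ i, √(t + -Fin.partialSum c i) = ‖e (u 0)‖ := by
      rw [← Real.sqrt_prod _ fun i _ => (htpos i).le, htprod, Real.sqrt_sq (norm_nonneg _)]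
    generalize hρ : (fun i => √(t + -Fin.partialSum c i)) = ρ at *
    have hρsq (i) : ρ i ^ 2 = t + -Fin.partialSum c i := by
      rw [← hρ]
      exact Real.sq_sqrt (htpos i).le
    replace hρpos (i) : 0 < ρ i := hρ ▸ hρpos i
    replace hρprod : ∏ i, ρ i = ‖e (u 0)‖ := hρ ▸ hρprod
    let tail (i : Fin k) : ℂ := ρ i.succ * u i.succ
    have htail (i) : tail i ≠ 0 :=
      mul_ne_zero (by exact_mod_cast (hρpos _).ne') (Circle.coe_ne_zero _)
    have htailprod : ∏ i, tail i ≠ 0 := Finset.prod_ne_zero_iff.2 fun i _ => htail i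
    have htailnorm (i) : ‖tail i‖ = ρ i.succ := by
      rw [norm_mul, Circle.norm_coe, mul_one, Complex.norm_of_nonneg (hρpos _).le]
    let z : Fin (k + 1) → ℂ := Fin.cons (e (u 0) / ∏ i, tail i) tail
    have hzprod : ∏ m, z m = e (u 0) := by
      simp only [z, Fin.prod_univ_succ, Fin.cons_zero, Fin.cons_succ]
      exact div_mul_cancel₀ _ htailprod
    have hznorm (i) : ‖z i‖ = ρ i := by
      induction i using Fin.cases with
      | zero =>
        simp only [z, Fin.cons_zero, norm_div, norm_prod, htailnorm, ← hρprod,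
          Fin.prod_univ_succ]
        exact mul_div_cancel_right₀ _ (Finset.prod_ne_zero_iff.2 fun i _ => (hρpos _).ne')
      | succ i => simpa [z] using htailnorm i
    have hz : z ∈ loopTorus k (Set.range e) c :=
      mem_loopTorus_iff.2 ⟨⟨u 0, hzprod.symm⟩, fun i => by
        rw [hznorm, hznorm, hρsq, hρsq, Fin.partialSum_zero]
        ring⟩
    refine ⟨⟨z, hz⟩, funext fun i => ?_⟩
    induction i using Fin.cases with
    | zero => exact he.toHomeomorph.symm_apply_eq.2 (Subtype.ext hzprod)
    | succ i => exact complexPhase_mul_coe (hρpos i.succ) (u i.succ) (htail i)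
  exact ⟨hcont.homeoOfEquivCompactToT2 (f := Equiv.ofBijective f ⟨hinj, hsurj⟩)⟩
end
end

section
/- Fix a natural number k ≥ 1 and let Γ ⊆ ℂ with 0 ∉ Γ. Then the twist torus Θ^k(Γ) = { z ∈ ℂ^{k+1} : ∃ w ∈ Γ, ∃ θ : Fin (k+1) → ℝ with Σ_m θ m = 0 and z m = w·exp(Complex.I·θ m) for every m } equals the set { z ∈ ℂ^{k+1} : ‖z m‖ = ‖z m'‖ for all m, m', and Π_m z m ∈ { w^{k+1} : w ∈ Γ } }. (This is Proposition 1.2: the twist torus Θ^k of Chekanov–Schlenk coincides with the pseudotoric torus S_{γ₁,(0,…,0)}, where γ₁ is the image of the curve γ under the (k+1)-st power map and the values c_1 = … = c_k = 0 single out the points with all coordinates of equal modulus.) -/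
noncomputable section

/-- The twist torus `Θ^k(Γ)` over a loop `Γ ⊆ ℂ`. -/
def twistTorus (k : ℕ) (Γ : Set ℂ) : Set (Fin (k + 1) → ℂ) :=
  { z | ∃ w ∈ Γ, ∃ θ : Fin (k + 1) → ℝ,
      (∑ m, θ m) = 0 ∧ ∀ m, z m = w * Complex.exp (Complex.I * θ m) }

/-- Proposition 1.2: the twist torus `Θ^k(Γ)` coincides with the
pseudotoric torus: the set of points with all coordinates of equal modulus whose
coordinate product lies in the image of `Γ` under `w ↦ w^{k+1}`. -/
theorem stmt_11 (k : ℕ) (hk : 1 ≤ k) (Γ : Set ℂ) (hΓ : (0 : ℂ) ∉ Γ) :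
    twistTorus k Γ =
      { z : Fin (k + 1) → ℂ |
        (∀ m m' : Fin (k + 1), ‖z m‖ = ‖z m'‖) ∧
          (∏ m, z m) ∈ { u : ℂ | ∃ w ∈ Γ, u = w ^ (k + 1) } } := by
  ext z
  constructor
  · rintro ⟨w, hw, θ, hθ, hz⟩
    refine ⟨fun m m' => ?_, w, hw, ?_⟩
    · simp [hz, mul_comm Complex.I, Complex.norm_exp_ofReal_mul_I]
    · simp_rw [hz]
      rw [Finset.prod_mul_distrib, ← Complex.exp_sum, ← Finset.mul_sum, ← Complex.ofReal_sum, hθ]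
      simp
  · rintro ⟨hnorm, w, hw, hprod⟩
    have hw0 : w ≠ 0 := fun h => hΓ (h ▸ hw)
    have hzw (m) : ‖z m‖ = ‖w‖ := by
      have h := congrArg norm hprod
      rw [norm_prod, Finset.prod_congr rfl fun i _ => hnorm i m, norm_pow] at h
      simpa using (pow_left_inj₀ (norm_nonneg _) (norm_nonneg _) k.succ_ne_zero).1 (by simpa using h)
    have hexp (m) : z m = w * Complex.exp (Complex.I * (z m / w).arg) := by
      have h := Complex.norm_mul_exp_arg_mul_I (z m / w)
      rw [norm_div, hzw, div_self (norm_ne_zero_iff.2 hw0), Complex.ofReal_one, one_mul,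
        mul_comm _ Complex.I] at h
      rw [h, mul_div_cancel₀ _ hw0]
    set φ : Fin k → ℝ := fun i => (z i.succ / w).arg with hφ
    refine ⟨w, hw, Fin.cons (-∑ i, φ i) φ, by simp [Fin.sum_univ_succ], fun m => ?_⟩
    refine Fin.cases ?_ (fun i => hexp i.succ) m
    have htail : ∏ i : Fin k, z i.succ = w ^ k * Complex.exp (Complex.I * (∑ i, φ i : ℝ)) := by
      rw [Finset.prod_congr rfl fun i _ => hexp (Fin.succ i), Finset.prod_mul_distrib,
        ← Complex.exp_sum, ← Finset.mul_sum, ← Complex.ofReal_sum]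
      simp [hφ]
    rw [Fin.prod_univ_succ, htail, pow_succ] at hprod
    rw [Fin.cons_zero, Complex.ofReal_neg, mul_neg, Complex.exp_neg,
      eq_mul_inv_iff_mul_eq₀ (Complex.exp_ne_zero _)]
    exact mul_left_cancel₀ (pow_ne_zero k hw0) (by linear_combination hprod)
end
end

section
/- Fix a natural number k ≥ 1. Let f : ℂ → ℝ be differentiable and let X_f : ℂ → ℂ satisfy, for all w, u ∈ ℂ, fderiv ℝ f w (u) = Im(conj (X_f w) * u) (X_f is the Hamiltonian vector field of f on the base ℂ). Define the lifted vector field Y : ℂ^{k+1} → ℂ^{k+1} by (Y(z)) j = conj(Π_{m ≠ j} z m) · X_f(ψ(z)). Then for every z, v ∈ ℂ^{k+1}, the real Fréchet derivative of F = f ∘ ψ at z evaluated at v equals ω(Y(z), v). That is, Y is the Hamiltonian vector field of the lifted function F = ψ* f on ℂ^{k+1}. -/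
noncomputable section

/-- The lift of a vector field `X_f` on the base `ℂ`:
`(Y z) j = conj(Π_{m ≠ j} z m) · X_f(ψ z)`. -/
def liftedField {k : ℕ} (Xf : ℂ → ℂ) (z : Fin (k + 1) → ℂ) : Fin (k + 1) → ℂ :=
  fun j => (starRingEnd ℂ) (∏ m ∈ Finset.univ.erase j, z m) * Xf (psiFib z)

/-- The real derivative of `ψ` is given by the Leibniz rule. -/
theorem hasFDerivAt_psiFib {k : ℕ} (z : Fin (k + 1) → ℂ) :
    HasFDerivAt psiFib
      (∑ j, (∏ m ∈ Finset.univ.erase j, z m) •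
        (ContinuousLinearMap.proj j : (Fin (k + 1) → ℂ) →L[ℝ] ℂ)) z :=
  hasFDerivAt_finsetProd

/-- if `X_f` is the Hamiltonian vector field of a differentiable `f : ℂ → ℝ`
on the base (`df_w(u) = Im(conj (X_f w) · u)`), then the lifted field `Y` is the Hamiltonian
vector field of the lifted function `F = f ∘ ψ` on `ℂ^{k+1}`. -/
theorem stmt_13 (k : ℕ) (hk : 1 ≤ k) (f : ℂ → ℝ) (hf : Differentiable ℝ f)
    (Xf : ℂ → ℂ)
    (hXf : ∀ w u : ℂ, fderiv ℝ f w u = ((starRingEnd ℂ) (Xf w) * u).im)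
    (z v : Fin (k + 1) → ℂ) :
    fderiv ℝ (f ∘ psiFib) z v = omegaStd (liftedField Xf z) v := by
  rw [((hf (psiFib z)).hasFDerivAt.comp z (hasFDerivAt_psiFib z)).fderiv]
  simp only [ContinuousLinearMap.comp_apply, hXf, sum_apply,
    smul_apply, ContinuousLinearMap.proj_apply, smul_eq_mul,
    Finset.mul_sum, Complex.im_sum, omegaStd, liftedField, map_mul, Complex.conj_conj]
  refine Finset.sum_congr rfl fun j _ => congrArg Complex.im ?_
  ring
end
end

section
/- Fix a natural number k ≥ 1, c : Fin k → ℝ, and a compact set Γ ⊆ ℂ with 0 ∉ Γ. Let S_{Γ,c} = { z ∈ ℂ^{k+1} : Π_m z m ∈ Γ and ‖z i‖² − ‖z (i+1)‖² = c i for all i ∈ Fin k }. Then S_{Γ,c} is displaceable in ℂ^{k+1}: there exist a smooth time-dependent Hamiltonian H : ℝ × ℂ^{k+1} → ℝ and a map Φ : ℝ → ℂ^{k+1} → ℂ^{k+1}, smooth in (t, z), with Φ 0 = id, each Φ t a bijection of ℂ^{k+1}, such that for all t, z and all v ∈ ℂ^{k+1} the t-derivative ∂_t Φ t z satisfies fderiv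 ℝ (H t) (Φ t z) (v) = ω(∂_t Φ t z, v) (i.e. Φ is the flow of the Hamiltonian vector field of H t), and (Φ 1) '' S_{Γ,c} ∩ S_{Γ,c} = ∅. (Proposition 2.1: every torus S_{γ,(c_1,…,c_k)} is displaceable in ℂ^{k+1}.) -/
noncomputable section

/-- The first coordinate is bounded on a torus `loopTorus k Γ c` over a bounded set `Γ`. -/
theorem exists_norm_apply_zero_le_of_mem_loopTorus (k : ℕ) (c : Fin k → ℝ) {Γ : Set ℂ}
    (hΓ : Bornology.IsBounded Γ) :
    ∃ R : ℝ, ∀ z ∈ loopTorus k Γ c, ‖z 0‖ ≤ R := by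
  obtain ⟨M, hM⟩ := hΓ.exists_norm_le
  set B : ℝ := ∑ i, |c i|
  have hB0 : 0 ≤ B := Finset.sum_nonneg fun i _ => abs_nonneg _
  have hcB (i : Fin k) : c i ≤ B :=
    (le_abs_self _).trans
      (Finset.single_le_sum (f := fun i => |c i|) (fun i _ => abs_nonneg _) (Finset.mem_univ i))
  refine ⟨max M (k * B + 1), fun z ⟨hzΓ, hzc⟩ => ?_⟩
  by_contra! hlt
  obtain ⟨hMz, hBz⟩ := max_lt_iff.mp hlt
  have hkB : 0 ≤ k * B := by positivity
  have hdiff (m : Fin (k + 1)) : ‖z 0‖ ^ 2 - ‖z m‖ ^ 2 ≤ (m : ℕ) * B := by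
    induction m using Fin.induction with
    | zero => simp
    | succ i ih =>
      have h1 := hzc i
      have h2 := hcB i
      simp only [Fin.val_castSucc, Fin.val_succ] at ih ⊢
      push_cast
      linarith
  have hone (m : Fin (k + 1)) : 1 ≤ ‖z m‖ := by
    have h1 : ((m : ℕ) : ℝ) * B ≤ k * B := by
      gcongr
      exact_mod_cast Nat.lt_succ_iff.mp m.isLt
    have h2 := hdiff m
    refine (one_le_sq_iff₀ (norm_nonneg _)).mp ?_
    nlinarith
  have hprod : ‖z 0‖ ≤ ‖∏ m, z m‖ := by
    rw [norm_prod, Fin.prod_univ_succ]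
    exact le_mul_of_one_le_right (norm_nonneg _) (Finset.one_le_prod fun i _ => hone i.succ)
  linarith [hM _ hzΓ]

/-- Proposition 2.1: every torus `S_{Γ,c}` is displaceable in `ℂ^{k+1}`:
there is a Hamiltonian isotopy `Φ` (the flow of the Hamiltonian vector field of a smooth
time-dependent Hamiltonian `H`, with respect to the standard symplectic form) whose
time-one map moves `S_{Γ,c}` off itself. -/
theorem stmt_17 (k : ℕ) (hk : 1 ≤ k) (c : Fin k → ℝ) (Γ : Set ℂ)
    (hΓc : IsCompact Γ) (hΓ : (0 : ℂ) ∉ Γ) :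
    ∃ (H : ℝ → (Fin (k + 1) → ℂ) → ℝ)
      (Φ : ℝ → (Fin (k + 1) → ℂ) → (Fin (k + 1) → ℂ)),
      ContDiff ℝ (⊤ : ℕ∞) (fun p : ℝ × (Fin (k + 1) → ℂ) => H p.1 p.2) ∧
      ContDiff ℝ (⊤ : ℕ∞) (fun p : ℝ × (Fin (k + 1) → ℂ) => Φ p.1 p.2) ∧
      Φ 0 = id ∧
      (∀ t : ℝ, Function.Bijective (Φ t)) ∧
      (∀ (t : ℝ) (z v : Fin (k + 1) → ℂ),
        fderiv ℝ (H t) (Φ t z) v = omegaStd (deriv (fun s : ℝ => Φ s z) t) v) ∧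
      Φ 1 '' loopTorus k Γ c ∩ loopTorus k Γ c = ∅ := by
  obtain ⟨R, hR⟩ := exists_norm_apply_zero_le_of_mem_loopTorus k c hΓc.isBounded
  set A : ℝ := 2 * |R| + 1
  let a : Fin (k + 1) → ℂ := Pi.single 0 (A : ℂ)
  let L : (Fin (k + 1) → ℂ) →L[ℝ] ℝ :=
    A • (Complex.imCLM ∘L ContinuousLinearMap.proj (R := ℝ) (φ := fun _ : Fin (k + 1) => ℂ) 0)
  refine ⟨fun _ z => L z, fun t z => z + t • a, L.contDiff.comp contDiff_snd, by fun_prop,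
    by ext; simp, fun t => (Equiv.addRight (t • a)).bijective, fun t z v => ?_, ?_⟩
  · have hd : deriv (fun s : ℝ => z + s • a) t = a := by
      simpa using (((hasDerivAt_id t).smul_const a).const_add z).deriv
    rw [hd, L.fderiv, omegaStd, Fin.sum_univ_succ]
    simp [L, a]
  · rw [Set.eq_empty_iff_forall_notMem]
    rintro _ ⟨⟨z, hz, rfl⟩, hw⟩
    have h1 := hR z hz
    have h2 := hR _ hw
    have h3 : ‖(A : ℂ)‖ ≤ ‖z 0 + A‖ + ‖z 0‖ := by
      simpa using norm_sub_le (z 0 + A) (z 0)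
    have h4 : ‖(A : ℂ)‖ = A := by
      rw [Complex.norm_real, Real.norm_of_nonneg (by positivity)]
    simp only [Pi.add_apply, one_smul, a, Pi.single_eq_same] at h2
    linarith [le_abs_self R]
end
end
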